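/- Let k be an uncountable algebraically closed field, let X and Y be integral schemes of finite type over k with dim X = dim Y (topological Krull dimension), and let f: X → Y be a dominant morphism of k-schemes. Suppose σ: X → X and τ: Y → Y are k-automorphisms such that f ∘ σ = τ ∘ f. Then (X, σ) has good dense orbits if and only if (Y, τ) has good dense orbits. -/

import Mathlib

open AlgebraicGeometry CategoryTheory CategoryTheory.Limits TopologicalSpace

universe u

namespace ThcrDM

variable {X : Scheme.{u}}

/-- The `n`-th iterate (`n : ℤ`) of an automorphism of a scheme, on points. -/
noncomputable def iter (σ : X ≅ X) : ℤ → X → X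
  | Int.ofNat n => (fun x => σ.hom.base x)^[n]
  | Int.negSucc n => (fun x => σ.inv.base x)^[n + 1]

/-- The σ-orbit `{σ^n(x) : n ∈ ℤ}` of a point `x`. -/
noncomputable def orbit (σ : X ≅ X) (x : X) : Set X :=
  Set.range fun n : ℤ => iter σ n x

/-- A subset `Z` is σ-invariant if `σ(Z) = Z`. -/
def SigmaInv (σ : X ≅ X) (Z : Set X) : Prop :=
  σ.hom.base '' Z = Z

/-- A σ-invariant closed subset is σ-irreducible if it admits no decomposition into two
σ-invariant closed subsets both properly contained in it. -/
def SigmaIrred (σ : X ≅ X) (Z : Set X) : Prop :=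
  IsClosed Z ∧ SigmaInv σ Z ∧
    ∀ Z₁ Z₂ : Set X, IsClosed Z₁ → IsClosed Z₂ → SigmaInv σ Z₁ → SigmaInv σ Z₂ →
      Z = Z₁ ∪ Z₂ → ¬(Z₁ ⊂ Z ∧ Z₂ ⊂ Z)

/-- `W` is a maximal σ-irreducible closed subset of `Z`, i.e. a maximal element, under
inclusion, of the set of proper σ-irreducible closed subsets of `Z`. -/
def MaxSigmaIrredIn (σ : X ≅ X) (Z W : Set X) : Prop :=
  SigmaIrred σ W ∧ W ⊂ Z ∧ ∀ W' : Set X, SigmaIrred σ W' → W' ⊂ Z → W ⊆ W' → W' = W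

/-- `(X, σ)` has good dense orbits if the set of points with dense σ-orbit is open. -/
def GoodDenseOrbits (σ : X ≅ X) : Prop :=
  IsOpen { x : X | Dense (orbit σ x) }

/-- `(X, σ)` is ordinary if for every σ-irreducible closed subset `Z`, the set of points of `Z`
whose σ-orbit is dense in `Z` is open in `Z` (in the subspace topology). -/
def Ordinary (σ : X ≅ X) : Prop :=
  ∀ Z : Set X, SigmaIrred σ Z →
    ∃ U : Set X, IsOpen U ∧ { z | z ∈ Z ∧ Z ⊆ closure (orbit σ z) } = U ∩ Z

/-- `(X, σ)` is countable-avoiding if every σ-irreducible closed subset has either finitely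
many or uncountably many maximal σ-irreducible closed subsets. -/
def CountableAvoiding (σ : X ≅ X) : Prop :=
  ∀ Z : Set X, SigmaIrred σ Z →
    { W : Set X | MaxSigmaIrredIn σ Z W }.Finite ∨
      ¬ { W : Set X | MaxSigmaIrredIn σ Z W }.Countable

/-- A subset `Z` has codimension one if every irreducible component of `Z` (i.e. every maximal
irreducible subset of `Z`) has coheight 1 in the poset of irreducible closed subsets of `X`. -/
def CodimOne (Z : Set X) : Prop :=
  ∀ T : IrreducibleCloseds X,
    Maximal (fun s : Set X => s ⊆ Z ∧ IsIrreducible s) ↑T → Order.coheight T = 1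

/-- Powers of an automorphism. -/
noncomputable def isoPow (σ : X ≅ X) : ℕ → (X ≅ X)
  | 0 => Iso.refl X
  | n + 1 => isoPow σ n ≪≫ σ

/-- The automorphism of the function field induced by an automorphism of an irreducible
scheme. -/
noncomputable def functionFieldAut [IrreducibleSpace X] (σ : X ≅ X) :
    X.functionField ⟶ X.functionField :=
  eqToHom (congrArg X.presheaf.stalk (genericPoint_eq_of_isOpenImmersion σ.hom).symm) ≫
    σ.hom.stalkMap (genericPoint X)

/-- The canonical map from the base ring into the function field of an irreducible
scheme over it. -/
noncomputable def constMap [IrreducibleSpace X] {k : CommRingCat.{u}} (p : X ⟶ Spec k) :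
    k ⟶ X.functionField :=
  haveI : Nonempty (⊤ : X.Opens) := ⟨⟨Classical.arbitrary X, trivial⟩⟩
  (Scheme.ΓSpecIso k).inv ≫ p.appTop ≫ X.germToFunctionField ⊤

/-!
By Noether normalization the dimension of an integral scheme of finite type over `k` is the
transcendence degree of its function field. Equality of dimensions therefore makes the function
field of `X` algebraic over that of `Y`, so that the fibre of `f` over the generic point of `Y` is
the generic point of `X` alone. A closed subset of `X` with dense image contains a point over the
generic point of `Y`, hence is all of `X`; applied to orbit closures, this shows that `x` has a
dense orbit if and only if `f x` does, and one direction of the theorem is continuity of `f`.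
For the other, Chevalley's theorem makes the image of the set of points with dense orbit a
constructible set containing the generic point of `Y`, hence a neighbourhood of it. Every dense
orbit meets this neighbourhood, so the preimages of its interior under the powers of `τ` make up the
set of all points with dense orbit.
-/

open Topology

section Topology

variable {S T : Type*} [TopologicalSpace S] [TopologicalSpace T]

lemma genericPoint_mem_of_isOpen [QuasiSober S] [IrreducibleSpace S] {U : Set S} (hU : IsOpen U)
    (hne : U.Nonempty) : genericPoint S ∈ U :=
  ((genericPoint_spec S).mem_open_set_iff hU).mpr (by rwa [Set.univ_inter])

lemma dense_of_genericPoint_mem [QuasiSober S] [IrreducibleSpace S] {s : Set S}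
    (hs : genericPoint S ∈ s) : Dense s :=
  (dense_iff_closure_eq.mpr (genericPoint_closure S)).mono (Set.singleton_subset_iff.mpr hs)

lemma map_genericPoint_of_denseRange [QuasiSober S] [IrreducibleSpace S] [QuasiSober T]
    [IrreducibleSpace T] [T0Space T] {f : S → T} (hf : Continuous f) (hd : DenseRange f) :
    f (genericPoint S) = genericPoint T := by
  refine IsGenericPoint.eq ?_ (genericPoint_spec T)
  simpa only [Set.image_univ, hd.closure_range] using (genericPoint_spec S).image hf

lemma mem_nhds_or_compl_mem_nhds_of_isConstructible {η : T} (hη : IsGenericPoint η Set.univ)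
    {s : Set T} (hs : IsConstructible s) : s ∈ 𝓝 η ∨ sᶜ ∈ 𝓝 η := by
  induction hs using IsConstructible.empty_union_induction with
  | open_retrocompact U hU _ =>
    rcases U.eq_empty_or_nonempty with rfl | hne
    · simp
    · exact .inl (hU.mem_nhds ((hη.mem_open_set_iff hU).mpr (by simpa using hne)))
  | union s _ t _ hs ht =>
    rcases hs with hs | hs
    · exact .inl (Filter.mem_of_superset hs Set.subset_union_left)
    rcases ht with ht | ht
    · exact .inl (Filter.mem_of_superset ht Set.subset_union_right)
    · exact .inr (Set.compl_union s t ▸ Filter.inter_mem hs ht)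
  | compl s _ hs => exact (compl_compl s).symm ▸ hs.symm

lemma mem_nhds_of_isLocallyConstructible {η : T} (hη : IsGenericPoint η Set.univ)
    {s : Set T} (hs : IsLocallyConstructible s) (hmem : η ∈ s) : s ∈ 𝓝 η := by
  obtain ⟨U, hU, hUopen, hUs⟩ := hs η
  let η' : U := ⟨η, mem_of_mem_nhds hU⟩
  have hη' : IsGenericPoint η' Set.univ := by
    rw [isGenericPoint_iff_specializes]
    exact fun y => iff_of_true (Topology.IsInducing.subtypeVal.specializes_iff.mp
      (hη.specializes (Set.mem_univ _))) (Set.mem_univ _)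
  have : Subtype.val ⁻¹' s ∈ 𝓝 η' :=
    (mem_nhds_or_compl_mem_nhds_of_isConstructible hη' hUs).resolve_right
      fun h => mem_of_mem_nhds h hmem
  rwa [preimage_coe_mem_nhds_subtype, hUopen.nhdsWithin_eq (mem_of_mem_nhds hU)] at this

lemma exists_mem_map_eq_genericPoint [NoetherianSpace S] [QuasiSober S] [QuasiSober T]
    [IrreducibleSpace T] [T0Space T] {f : S → T} (hf : Continuous f) {Z : Set S}
    (hZ : IsClosed Z) (hd : Dense (f '' Z)) : ∃ z ∈ Z, f z = genericPoint T := by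
  obtain ⟨C, hC, hCclosed, hCirred, rfl⟩ :=
    NoetherianSpace.exists_finite_set_isClosed_irreducible hZ
  have hcover : genericPoint T ∈ ⋃ t ∈ C, closure (f '' t) := by
    rw [← hC.closure_biUnion, ← Set.image_iUnion₂, ← Set.sUnion_eq_biUnion, hd.closure_eq]
    trivial
  simp only [Set.mem_iUnion, exists_prop] at hcover
  obtain ⟨t, ht, hηt⟩ := hcover
  have hgen : IsGenericPoint (hCirred t ht).genericPoint t := by
    simpa only [(hCclosed t ht).closure_eq] using (hCirred t ht).isGenericPoint_genericPoint_closure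
  have hft : closure (f '' t) = Set.univ :=
    Set.univ_subset_iff.mp (((genericPoint_spec T).mem_closed_set_iff isClosed_closure).mp hηt)
  exact ⟨_, Set.mem_sUnion_of_mem hgen.mem ht, (hft ▸ hgen.image hf).eq (genericPoint_spec T)⟩

lemma dense_image_iff_of_generic_fiber [NoetherianSpace S] [QuasiSober S] [IrreducibleSpace S]
    [QuasiSober T] [IrreducibleSpace T] [T0Space T] {f : S → T} (hf : Continuous f)
    (hd : DenseRange f) (hfib : ∀ x, f x = genericPoint T → x = genericPoint S) {s : Set S} :
    Dense (f '' s) ↔ Dense s := by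
  refine ⟨fun h => ?_, hd.dense_image hf⟩
  obtain ⟨z, hz, hfz⟩ := exists_mem_map_eq_genericPoint hf isClosed_closure
    (h.mono (Set.image_mono subset_closure))
  exact dense_closure.mp (dense_of_genericPoint_mem (hfib z hfz ▸ hz))

lemma topologicalKrullDim_eq_iSup_of_isOpenCover {ι : Type*} {U : ι → Opens T}
    (hU : IsOpenCover U) : topologicalKrullDim T = ⨆ i, topologicalKrullDim (U i) := by
  refine le_antisymm ?_ (iSup_le fun i => topologicalKrullDim_subspace_le T (U i))
  rw [topologicalKrullDim, Order.krullDim_eq_iSup_coheight]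
  refine iSup_le fun Z => ?_
  obtain ⟨x, hxZ⟩ := Z.2.nonempty
  obtain ⟨i, hxi⟩ := hU.exists_mem x
  have hi := (U i).isOpen.isOpenEmbedding_subtypeVal
  obtain ⟨W, hW⟩ := (IrreducibleCloseds.orderIsoOfIsOpenEmbedding _ hi).surjective
    ⟨Z, ⟨x, hxi⟩, hxZ⟩
  have hWZ : IrreducibleCloseds.map _ hi.continuous W = Z := congrArg Subtype.val hW
  calc (Order.coheight Z : WithBot ℕ∞)
      = Order.coheight W := by rw [← hWZ, hi.coheight_map]
    _ ≤ topologicalKrullDim (U i) := Order.coheight_le_krullDim _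
    _ ≤ ⨆ i, topologicalKrullDim (U i) := le_iSup (fun i => topologicalKrullDim (U i)) i

end Topology

section CommutativeAlgebra

lemma ringKrullDim_eq_of_isIntegral (R S : Type*) [CommRing R] [CommRing S] [Algebra R S]
    [Algebra.IsIntegral R S] [FaithfulSMul R S] : ringKrullDim S = ringKrullDim R := by
  refine le_antisymm (Order.krullDim_le_of_strictMono (PrimeSpectrum.comap (algebraMap R S))
    fun _ Q h => Ideal.IsIntegral.comap_lt_comap (J := Q.asIdeal) h) (iSup_le fun l => ?_)
  obtain ⟨Q, hQ⟩ := Algebra.IsIntegral.comap_surjective R S l.head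
  have : Q.asIdeal.LiesOver l.head.asIdeal := ⟨congrArg PrimeSpectrum.asIdeal hQ.symm⟩
  obtain ⟨L, hL, -⟩ := Ideal.exists_ltSeries_of_hasGoingUp l Q.asIdeal
  exact hL ▸ Order.LTSeries.length_le_krullDim L

lemma ringKrullDim_eq_toENat_trdeg (k A : Type*) [Field k] [CommRing A] [IsDomain A]
    [Algebra k A] [Algebra.FiniteType k A] :
    ringKrullDim A = Cardinal.toENat (Algebra.trdeg k A) := by
  obtain ⟨n, g, hg, hint⟩ := exists_integral_inj_algHom_of_fg k A
  algebraize [g.toRingHom]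
  have : FaithfulSMul (MvPolynomial (Fin n) k) A :=
    (faithfulSMul_iff_algebraMap_injective _ _).mpr hg
  have htrdeg := lift_trdeg_add_eq k (MvPolynomial (Fin n) k) A
  rw [trdeg_eq_zero (R := MvPolynomial (Fin n) k), MvPolynomial.trdeg_of_isDomain] at htrdeg
  rw [ringKrullDim_eq_of_isIntegral (MvPolynomial (Fin n) k) A,
    MvPolynomial.ringKrullDim_of_isNoetherianRing, ← Cardinal.toENat_lift, ← htrdeg]
  simp

lemma ringKrullDim_eq_toENat_trdeg_of_isFractionRing (k A K : Type*) [Field k] [CommRing A]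
    [IsDomain A] [Field K] [Algebra k A] [Algebra A K] [Algebra k K] [IsScalarTower k A K]
    [IsFractionRing A K] [Algebra.FiniteType k A] :
    ringKrullDim A = Cardinal.toENat (Algebra.trdeg k K) := by
  have : Algebra.IsAlgebraic A K := IsLocalization.isAlgebraic K (nonZeroDivisors A)
  have htrdeg := lift_trdeg_add_eq k A K
  rw [trdeg_eq_zero (R := A), Cardinal.lift_zero, add_zero] at htrdeg
  rw [ringKrullDim_eq_toENat_trdeg k A, ← Cardinal.toENat_lift, htrdeg, Cardinal.toENat_lift]

lemma isAlgebraic_of_ringKrullDim_eq (k A B : Type*) [Field k] [CommRing A] [IsDomain A]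
    [CommRing B] [IsDomain B] [Algebra k A] [Algebra k B] [Algebra A B] [IsScalarTower k A B]
    [FaithfulSMul A B] [Algebra.FiniteType k A] [Algebra.FiniteType k B]
    (h : ringKrullDim A = ringKrullDim B) : Algebra.IsAlgebraic A B := by
  rw [ringKrullDim_eq_toENat_trdeg k A, ringKrullDim_eq_toENat_trdeg k B, WithBot.coe_inj] at h
  have hadd := congrArg Cardinal.toENat (lift_trdeg_add_eq k A B)
  rw [map_add, Cardinal.toENat_lift, Cardinal.toENat_lift, Cardinal.toENat_lift, ← h] at hadd
  have hfin : Cardinal.toENat (Algebra.trdeg k A) ≠ ⊤ :=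
    Cardinal.toENat_ne_top.mpr trdeg_lt_aleph0_of_finiteType
  rw [← trdeg_eq_zero_iff, ← Cardinal.toENat_eq_zero]
  exact (ENat.add_right_injective_of_ne_top hfin) (hadd.trans (add_zero _).symm)

lemma eq_bot_of_comap_eq_bot_of_isAlgebraic {A B : Type*} [CommRing A] [CommRing B] [IsDomain B]
    [Algebra A B] [Algebra.IsAlgebraic A B] {I : Ideal B}
    (hI : I.comap (algebraMap A B) = ⊥) : I = ⊥ := by
  by_contra hne
  obtain ⟨x, hxI, hx0⟩ := I.ne_bot_iff.mp hne
  exact Ideal.comap_ne_bot_of_algebraic_mem hx0 hxI (Algebra.IsAlgebraic.isAlgebraic x) hI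

end CommutativeAlgebra

section StructureMap

variable {Y : Scheme.{u}} {k : CommRingCat.{u}}

/-- The ring homomorphism `k ⟶ Γ(X, U)` through which a morphism `X ⟶ Spec k` makes the sections
over `U` a `k`-algebra. -/
noncomputable def structureMap (p : X ⟶ Spec k) (U : X.Opens) : k ⟶ Γ(X, U) :=
  (Scheme.ΓSpecIso k).inv ≫ p.appLE ⊤ U (le_top.trans_eq p.preimage_top.symm)

lemma finiteType_structureMap (p : X ⟶ Spec k) [LocallyOfFiniteType p] {U : X.Opens}
    (hU : IsAffineOpen U) : (structureMap p U).hom.FiniteType :=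
  (p.finiteType_appLE (isAffineOpen_top _) hU le_top).comp <|
    .of_surjective _ (Scheme.ΓSpecIso k).symm.commRingCatIsoToRingEquiv.surjective

lemma structureMap_germToFunctionField [IrreducibleSpace X] (p : X ⟶ Spec k) (U : X.Opens)
    [Nonempty U] : structureMap p U ≫ X.germToFunctionField U = constMap p := by
  simp only [structureMap, constMap, Scheme.Hom.appLE, Category.assoc]
  congr 2
  exact X.presheaf.germ_res (homOfLE le_top) _ _

lemma structureMap_appLE (f : X ⟶ Y) (q : Y ⟶ Spec k) {U : X.Opens} {V : Y.Opens}
    (hUV : U ≤ f ⁻¹ᵁ V) : structureMap q V ≫ f.appLE V U hUV = structureMap (f ≫ q) U := by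
  rw [structureMap, structureMap, Category.assoc, Scheme.Hom.appLE_comp_appLE]

end StructureMap

section Dimension

variable {k : Type u} [Field k]

lemma ringKrullDim_eq_toENat_trdeg_functionField [IsIntegral X]
    (p : X ⟶ Spec (CommRingCat.of k)) [LocallyOfFiniteType p] {U : X.Opens} (hU : IsAffineOpen U)
    [Nonempty U] :
    letI := (constMap p).hom.toAlgebra
    ringKrullDim Γ(X, U) = Cardinal.toENat (Algebra.trdeg k X.functionField) := by
  let := (constMap p).hom.toAlgebra
  let := (structureMap p U).hom.toAlgebra
  have : Algebra.FiniteType k Γ(X, U) := finiteType_structureMap p hU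
  have : IsScalarTower k Γ(X, U) X.functionField :=
    .of_algebraMap_eq' (congrArg CommRingCat.Hom.hom (structureMap_germToFunctionField p U)).symm
  have := functionField_isFractionRing_of_isAffineOpen X U hU
  exact ringKrullDim_eq_toENat_trdeg_of_isFractionRing k Γ(X, U) X.functionField

lemma topologicalKrullDim_opens_of_isAffineOpen {U : X.Opens} (hU : IsAffineOpen U) :
    topologicalKrullDim U = ringKrullDim Γ(X, U) := by
  rw [← PrimeSpectrum.topologicalKrullDim_eq_ringKrullDim]
  exact IsHomeomorph.topologicalKrullDim_eq _ (Scheme.homeoOfIso hU.isoSpec).isHomeomorph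

lemma topologicalKrullDim_eq_ringKrullDim_of_isAffineOpen [IsIntegral X]
    (p : X ⟶ Spec (CommRingCat.of k)) [LocallyOfFiniteType p] {U : X.Opens} (hU : IsAffineOpen U)
    [Nonempty U] : topologicalKrullDim X = ringKrullDim Γ(X, U) := by
  have hcover : IsOpenCover fun V : {V : X.affineOpens // Nonempty V.1} => V.1.1 := by
    refine IsOpenCover.mk (eq_top_iff.mpr fun x _ => ?_)
    obtain ⟨V, hV, hxV, -⟩ := exists_isAffineOpen_mem_and_subset (U := ⊤) (x := x) trivial
    exact Opens.mem_iSup.mpr ⟨⟨⟨V, hV⟩, ⟨x, hxV⟩⟩, hxV⟩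
  have hconst (V : {V : X.affineOpens // Nonempty V.1}) :
      topologicalKrullDim V.1.1 = ringKrullDim Γ(X, U) := by
    have := V.2
    rw [topologicalKrullDim_opens_of_isAffineOpen V.1.2,
      ringKrullDim_eq_toENat_trdeg_functionField p V.1.2,
      ringKrullDim_eq_toENat_trdeg_functionField p hU]
  have : Nonempty {V : X.affineOpens // Nonempty V.1} := ⟨⟨⟨U, hU⟩, ‹_›⟩⟩
  exact (topologicalKrullDim_eq_iSup_of_isOpenCover hcover).trans
    ((iSup_congr hconst).trans ciSup_const)

end Dimension

section GenericFiber

variable {Y : Scheme.{u}}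

lemma primeIdealOf_asIdeal_eq_bot_iff [IsIntegral X] {U : X.Opens} (hU : IsAffineOpen U) (x : U) :
    (hU.primeIdealOf x).asIdeal = ⊥ ↔ (x : X) = genericPoint X := by
  have : Nonempty U := ⟨x⟩
  have hη : genericPoint X ∈ U := genericPoint_mem_of_isOpen U.isOpen ⟨x, x.2⟩
  have hbot : (hU.primeIdealOf ⟨genericPoint X, hη⟩).asIdeal = ⊥ := by
    rw [hU.primeIdealOf_genericPoint, genericPoint_eq_bot_of_affine]
    rfl
  refine ⟨fun hx => ?_, fun hx => ?_⟩
  · rw [← hU.fromSpec_primeIdealOf x, PrimeSpectrum.ext (hx.trans hbot.symm),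
      hU.fromSpec_primeIdealOf]
  · obtain rfl : x = ⟨genericPoint X, hη⟩ := Subtype.ext hx
    exact hbot

lemma comap_appLE_primeIdealOf_eq_bot_iff [IsIntegral Y] (f : X ⟶ Y) {U : X.Opens} {V : Y.Opens}
    (hU : IsAffineOpen U) (hV : IsAffineOpen V) (hUV : U ≤ f ⁻¹ᵁ V) (x : U) :
    (hU.primeIdealOf x).asIdeal.comap (f.appLE V U hUV).hom = ⊥ ↔ f x = genericPoint Y := by
  rw [← primeIdealOf_asIdeal_eq_bot_iff hV ⟨f x, hUV x.2⟩,
    ← IsAffineOpen.comap_primeIdealOf_appLE (f := f) V hV U hU hUV x.2]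
  rfl

lemma appLE_injective_of_isDominant [IsIntegral X] [IsIntegral Y] (f : X ⟶ Y) [IsDominant f]
    {U : X.Opens} {V : Y.Opens} (hU : IsAffineOpen U) (hV : IsAffineOpen V) [Nonempty U]
    (hUV : U ≤ f ⁻¹ᵁ V) : Function.Injective (f.appLE V U hUV) := by
  have hη : genericPoint X ∈ U :=
    genericPoint_mem_of_isOpen U.isOpen (Set.nonempty_coe_sort.mp ‹Nonempty U›)
  have hcomap := (comap_appLE_primeIdealOf_eq_bot_iff f hU hV hUV ⟨_, hη⟩).mpr
    (map_genericPoint_of_denseRange f.continuous f.denseRange)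
  rwa [(primeIdealOf_asIdeal_eq_bot_iff hU ⟨_, hη⟩).mpr rfl, ← RingHom.ker_eq_comap_bot,
    ← RingHom.injective_iff_ker_eq_bot] at hcomap

lemma isAlgebraic_appLE_of_topologicalKrullDim_eq {k : Type u} [Field k] [IsIntegral X]
    [IsIntegral Y] (f : X ⟶ Y) [IsDominant f] (q : Y ⟶ Spec (CommRingCat.of k))
    [LocallyOfFiniteType q] [LocallyOfFiniteType (f ≫ q)]
    (hdim : topologicalKrullDim X = topologicalKrullDim Y) {U : X.Opens} {V : Y.Opens}
    (hU : IsAffineOpen U) (hV : IsAffineOpen V) [Nonempty U] [Nonempty V] (hUV : U ≤ f ⁻¹ᵁ V) :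
    letI := (f.appLE V U hUV).hom.toAlgebra
    Algebra.IsAlgebraic Γ(Y, V) Γ(X, U) := by
  let := (f.appLE V U hUV).hom.toAlgebra
  let := (structureMap (f ≫ q) U).hom.toAlgebra
  let := (structureMap q V).hom.toAlgebra
  have : IsScalarTower k Γ(Y, V) Γ(X, U) :=
    .of_algebraMap_eq' (congrArg CommRingCat.Hom.hom (structureMap_appLE f q hUV)).symm
  have : FaithfulSMul Γ(Y, V) Γ(X, U) := (faithfulSMul_iff_algebraMap_injective _ _).mpr
    (appLE_injective_of_isDominant f hU hV hUV)
  have : Algebra.FiniteType k Γ(X, U) := finiteType_structureMap (f ≫ q) hU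
  have : Algebra.FiniteType k Γ(Y, V) := finiteType_structureMap q hV
  refine isAlgebraic_of_ringKrullDim_eq k Γ(Y, V) Γ(X, U) ?_
  rw [← topologicalKrullDim_eq_ringKrullDim_of_isAffineOpen (f ≫ q) hU, hdim,
    topologicalKrullDim_eq_ringKrullDim_of_isAffineOpen q hV]

lemma eq_genericPoint_of_map_eq_genericPoint {k : Type u} [Field k] [IsIntegral X]
    [IsIntegral Y] (f : X ⟶ Y) [IsDominant f] (q : Y ⟶ Spec (CommRingCat.of k))
    [LocallyOfFiniteType q] [LocallyOfFiniteType (f ≫ q)]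
    (hdim : topologicalKrullDim X = topologicalKrullDim Y) {x : X} (hx : f x = genericPoint Y) :
    x = genericPoint X := by
  obtain ⟨V, hV, hxV, -⟩ := exists_isAffineOpen_mem_and_subset (U := ⊤) (x := f x) trivial
  obtain ⟨U, hU, hxU, hUV⟩ := exists_isAffineOpen_mem_and_subset (U := f ⁻¹ᵁ V) (x := x) hxV
  have : Nonempty U := ⟨x, hxU⟩
  have : Nonempty V := ⟨f x, hxV⟩
  let := (f.appLE V U hUV).hom.toAlgebra
  have : Algebra.IsAlgebraic Γ(Y, V) Γ(X, U) :=
    isAlgebraic_appLE_of_topologicalKrullDim_eq f q hdim hU hV hUV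
  exact (primeIdealOf_asIdeal_eq_bot_iff hU ⟨x, hxU⟩).mp <| eq_bot_of_comap_eq_bot_of_isAlgebraic <|
    (comap_appLE_primeIdealOf_eq_bot_iff f hU hV hUV ⟨x, hxU⟩).mpr hx

end GenericFiber

section Orbit

variable {Y : Scheme.{u}}

lemma iter_eq_zpow (σ : X ≅ X) (n : ℤ) : iter σ n = ⇑((Scheme.homeoOfIso σ : X ≃ₜ X) ^ n) := by
  have hpow (e : X ≃ₜ X) (m : ℕ) : ⇑(e ^ m) = e^[m] :=
    hom_coe_pow (fun e : X ≃ₜ X => ⇑e) rfl (fun _ _ => rfl) e m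
  cases n with
  | ofNat n =>
    rw [Int.ofNat_eq_natCast, zpow_natCast, hpow]
    rfl
  | negSucc n =>
    rw [zpow_negSucc, ← inv_pow, hpow]
    rfl

lemma continuous_iter (σ : X ≅ X) (n : ℤ) : Continuous (iter σ n) :=
  iter_eq_zpow σ n ▸ Homeomorph.continuous _

lemma iter_iter (σ : X ≅ X) (m n : ℤ) (x : X) : iter σ m (iter σ n x) = iter σ (m + n) x := by
  simp only [iter_eq_zpow, zpow_add, Homeomorph.mul_apply]

lemma orbit_iter (σ : X ≅ X) (n : ℤ) (x : X) : orbit σ (iter σ n x) = orbit σ x := by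
  simp only [orbit, iter_iter]
  exact (Equiv.addRight n).surjective.range_comp fun m => iter σ m x

lemma mem_orbit_self (σ : X ≅ X) (x : X) : x ∈ orbit σ x := ⟨0, rfl⟩

lemma map_iter (f : X ⟶ Y) (σ : X ≅ X) (τ : Y ≅ Y) (hcomm : σ.hom ≫ f = f ≫ τ.hom) (n : ℤ)
    (x : X) : f (iter σ n x) = iter τ n (f x) := by
  have hinv : σ.inv ≫ f = f ≫ τ.inv := by
    rw [Iso.inv_comp_eq, reassoc_of% hcomm, Iso.hom_inv_id, Category.comp_id]
  have hsemi (s : X ⟶ X) (t : Y ⟶ Y) (h : s ≫ f = f ≫ t) : Function.Semiconj f s t := fun x => by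
    simpa only [Scheme.Hom.comp_apply] using congrArg (fun g : X ⟶ Y => g x) h
  cases n with
  | ofNat n => exact (hsemi _ _ hcomm).iterate_right n x
  | negSucc n => exact (hsemi _ _ hinv).iterate_right (n + 1) x

lemma image_orbit (f : X ⟶ Y) (σ : X ≅ X) (τ : Y ≅ Y) (hcomm : σ.hom ≫ f = f ≫ τ.hom) (x : X) :
    f '' orbit σ x = orbit τ (f x) := by
  simp only [orbit, ← Set.range_comp, Function.comp_def, map_iter f σ τ hcomm]

lemma goodDenseOrbits_of_mem_nhds (σ : X ≅ X) {x : X}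
    (hx : {x : X | Dense (orbit σ x)} ∈ 𝓝 x) : GoodDenseOrbits σ := by
  obtain ⟨U, hUdense, hU, hxU⟩ := mem_nhds_iff.mp hx
  have hunion : {x : X | Dense (orbit σ x)} = ⋃ n : ℤ, iter σ n ⁻¹' U := by
    ext y
    rw [Set.mem_iUnion]
    refine ⟨fun hy => ?_, fun ⟨n, hn⟩ => ?_⟩
    · obtain ⟨_, hyU, n, rfl⟩ := Dense.inter_open_nonempty hy U hU ⟨x, hxU⟩
      exact ⟨n, hyU⟩
    · simpa only [Set.mem_ofPred_eq, orbit_iter] using hUdense hn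
  rw [GoodDenseOrbits, hunion]
  exact isOpen_iUnion fun n => hU.preimage (continuous_iter σ n)

end Orbit

section Transfer

variable {Y : Scheme.{u}}

lemma dense_orbit_map_iff [IrreducibleSpace X] [IrreducibleSpace Y] [NoetherianSpace X]
    (f : X ⟶ Y) [IsDominant f] (hfib : ∀ x, f x = genericPoint Y → x = genericPoint X)
    (σ : X ≅ X) (τ : Y ≅ Y) (hcomm : σ.hom ≫ f = f ≫ τ.hom) (x : X) :
    Dense (orbit τ (f x)) ↔ Dense (orbit σ x) := by
  rw [← image_orbit f σ τ hcomm, dense_image_iff_of_generic_fiber f.continuous f.denseRange hfib]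

theorem goodDenseOrbits_iff_of_generic_fiber [IrreducibleSpace X] [IrreducibleSpace Y]
    [NoetherianSpace X] (f : X ⟶ Y) [LocallyOfFinitePresentation f] [IsDominant f]
    (hfib : ∀ x, f x = genericPoint Y → x = genericPoint X)
    (σ : X ≅ X) (τ : Y ≅ Y) (hcomm : σ.hom ≫ f = f ≫ τ.hom) :
    GoodDenseOrbits σ ↔ GoodDenseOrbits τ := by
  have hkey := dense_orbit_map_iff f hfib σ τ hcomm
  refine ⟨fun h => ?_, fun h => ?_⟩
  · have himage : IsLocallyConstructible (f '' {x : X | Dense (orbit σ x)}) :=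
      f.isLocallyConstructible_image
        ((NoetherianSpace.isCompact _).isConstructible h).isLocallyConstructible
    have hmem : genericPoint Y ∈ f '' {x : X | Dense (orbit σ x)} :=
      ⟨genericPoint X, dense_of_genericPoint_mem (mem_orbit_self σ _),
        map_genericPoint_of_denseRange f.continuous f.denseRange⟩
    refine goodDenseOrbits_of_mem_nhds τ (Filter.mem_of_superset
      (mem_nhds_of_isLocallyConstructible (genericPoint_spec Y) himage hmem) ?_)
    exact Set.image_subset_iff.mpr fun x hx => (hkey x).mpr hx
  · have hpre : {x : X | Dense (orbit σ x)} = f ⁻¹' {y : Y | Dense (orbit τ y)} :=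
      Set.ext fun x => (hkey x).symm
    rw [GoodDenseOrbits, hpre]
    exact IsOpen.preimage f.continuous h

end Transfer

theorem statement12_general (k : Type u) [Field k]
    (X Y : Scheme.{u}) (p : X ⟶ Spec (CommRingCat.of k)) (q : Y ⟶ Spec (CommRingCat.of k))
    [IsIntegral X] [IsIntegral Y] [LocallyOfFiniteType p] [QuasiCompact p] [LocallyOfFiniteType q]
    (hdim : topologicalKrullDim X = topologicalKrullDim Y)
    (f : X ⟶ Y) (hf : f ≫ q = p) [IsDominant f]
    (σ : X ≅ X) (τ : Y ≅ Y) (hcomm : σ.hom ≫ f = f ≫ τ.hom) :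
    GoodDenseOrbits σ ↔ GoodDenseOrbits τ := by
  subst hf
  have : CompactSpace X := (quasiCompact_iff_compactSpace (f ≫ q)).mp inferInstance
  have : IsLocallyNoetherian X := LocallyOfFiniteType.isLocallyNoetherian (f ≫ q)
  have : IsNoetherian X := {}
  have : IsLocallyNoetherian Y := LocallyOfFiniteType.isLocallyNoetherian q
  have : LocallyOfFiniteType f := locallyOfFiniteType_of_comp f q
  exact goodDenseOrbits_iff_of_generic_fiber f
    (fun _ => eq_genericPoint_of_map_eq_genericPoint f q hdim) σ τ hcomm

/-- Lemma 7.3 of the paper. Good dense orbits transfer along a dominant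
morphism of integral `k`-schemes of the same dimension intertwining the automorphisms. -/
theorem statement12 (k : Type u) [Field k] [IsAlgClosed k] [Uncountable k]
    (X Y : Scheme.{u}) (p : X ⟶ Spec (CommRingCat.of k)) (q : Y ⟶ Spec (CommRingCat.of k))
    [IsIntegral X] [IsIntegral Y]
    [LocallyOfFiniteType p] [QuasiCompact p] [LocallyOfFiniteType q] [QuasiCompact q]
    (hdim : topologicalKrullDim ↥X = topologicalKrullDim ↥Y)
    (f : X ⟶ Y) (hf : f ≫ q = p) [IsDominant f]
    (σ : X ≅ X) (τ : Y ≅ Y) (hσ : σ.hom ≫ p = p) (hτ : τ.hom ≫ q = q)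
    (hcomm : σ.hom ≫ f = f ≫ τ.hom) :
    GoodDenseOrbits σ ↔ GoodDenseOrbits τ := by
  exact statement12_general k X Y p q hdim f hf σ τ hcomm

end ThcrDM
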